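/- Let f_1,…,f_m ∈ MvPolynomial (Fin (k−1)) ℝ be nonzero polynomials, let P̃0 = {π' ∈ Δ̃_{k-1} : f_i(π') = 0 for i = 1,…,m}, and let P0 ⊆ Δ_{k-1} be the corresponding null hypothesis, with ∅ ≠ P0 ≠ Δ_{k-1}. Then there exists an NTUB test of P0 of sample size 2·min_i totalDegree(f_i), and there exists an SUB test of P0 of sample size 2·max_i totalDegree(f_i). -/

import Mathlib

open Finset

/-- The probability simplex on a finite index set `ι`. -/
def probSimplex (ι : Type) [Fintype ι] : Set (ι → ℝ) :=
  {π | (∀ i, 0 ≤ π i) ∧ ∑ i, π i = 1}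

/-- Count vectors of sample size `n`: functions `x : ι → ℕ` with `∑ i, x i = n`. -/
def countVecs (ι : Type) [Fintype ι] [DecidableEq ι] (n : ℕ) : Finset (ι → ℕ) :=
  (Fintype.piFinset fun _ : ι => Finset.range (n + 1)).filter fun x => ∑ i, x i = n

/-- A (randomized) test of sample size `n`: values in `[0,1]` on all count vectors. -/
def IsTest (ι : Type) [Fintype ι] [DecidableEq ι] (n : ℕ) (φ : (ι → ℕ) → ℝ) : Prop :=
  ∀ x ∈ countVecs ι n, 0 ≤ φ x ∧ φ x ≤ 1

/-- The power function of a test. -/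
noncomputable def powerFn (ι : Type) [Fintype ι] [DecidableEq ι] (n : ℕ)
    (φ : (ι → ℕ) → ℝ) (π : ι → ℝ) : ℝ :=
  ∑ x ∈ countVecs ι n, φ x * (Nat.multinomial Finset.univ x : ℝ) * ∏ i, π i ^ x i

/-- Unbiasedness relative to the null hypothesis `P0`. -/
def Unbiased (ι : Type) [Fintype ι] [DecidableEq ι] (n : ℕ) (P0 : Set (ι → ℝ))
    (φ : (ι → ℕ) → ℝ) : Prop :=
  ∀ π0 ∈ P0, ∀ πA ∈ probSimplex ι \ P0, powerFn ι n φ π0 ≤ powerFn ι n φ πA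

/-- Non-trivial unbiased test: unbiased with non-constant power on the simplex. -/
def IsNTUB (ι : Type) [Fintype ι] [DecidableEq ι] (n : ℕ) (P0 : Set (ι → ℝ))
    (φ : (ι → ℕ) → ℝ) : Prop :=
  Unbiased ι n P0 φ ∧
    ∃ π ∈ probSimplex ι, ∃ π' ∈ probSimplex ι, powerFn ι n φ π ≠ powerFn ι n φ π'

/-- Strictly unbiased test. -/
def IsSUB (ι : Type) [Fintype ι] [DecidableEq ι] (n : ℕ) (P0 : Set (ι → ℝ))
    (φ : (ι → ℕ) → ℝ) : Prop :=
  ∀ π0 ∈ P0, ∀ πA ∈ probSimplex ι \ P0, powerFn ι n φ π0 < powerFn ι n φ πA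

/-- Level-`α` test. -/
def IsLevel (ι : Type) [Fintype ι] [DecidableEq ι] (n : ℕ) (P0 : Set (ι → ℝ)) (α : ℝ)
    (φ : (ι → ℕ) → ℝ) : Prop :=
  ∀ π ∈ P0, powerFn ι n φ π ≤ α

/-- A test has size `α` if the supremum of its power over `P0` is `α`. -/
def HasSize (ι : Type) [Fintype ι] [DecidableEq ι] (n : ℕ) (P0 : Set (ι → ℝ)) (α : ℝ)
    (φ : (ι → ℕ) → ℝ) : Prop :=
  IsLUB (powerFn ι n φ '' P0) α

/-- Uniformly most powerful unbiased level-`α` test. -/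
def IsUMPU (ι : Type) [Fintype ι] [DecidableEq ι] (n : ℕ) (P0 : Set (ι → ℝ)) (α : ℝ)
    (φ : (ι → ℕ) → ℝ) : Prop :=
  IsLevel ι n P0 α φ ∧ Unbiased ι n P0 φ ∧
    ∀ ψ, IsTest ι n ψ → IsLevel ι n P0 α ψ → Unbiased ι n P0 ψ →
      ∀ πA ∈ probSimplex ι \ P0, powerFn ι n ψ πA ≤ powerFn ι n φ πA

/-- The projected simplex in `ℝ^(k-1)`. -/
def projSimplex (k : ℕ) : Set (Fin (k - 1) → ℝ) :=
  {π' | (∀ i, 0 ≤ π' i) ∧ ∑ i, π' i ≤ 1}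

/-- Identify `π' ∈ Δ̃_{k-1}` with `(π'_1, …, π'_{k-1}, 1 - ∑ i, π' i) ∈ Δ_{k-1}`. -/
def liftProj (k : ℕ) (π' : Fin (k - 1) → ℝ) : Fin k → ℝ :=
  fun i => if h : (i : ℕ) < k - 1 then π' ⟨(i : ℕ), h⟩ else 1 - ∑ j, π' j

/-- Projection of a point of `Δ_{k-1}` onto its first `k-1` coordinates. -/
def projPoint (k : ℕ) (π : Fin k → ℝ) : Fin (k - 1) → ℝ :=
  fun j => π (Fin.castLE (Nat.sub_le k 1) j)

/-!
On the simplex the linear form `∑ i, X i` equals `1`, so a polynomial of degree at most `n` agrees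
there with its degree-`n` homogenization by that form. A form of degree `n` is, up to dividing its
coefficients by multinomial coefficients, a power function with arbitrary real weights in place of
a test, and a positive affine rescaling turns the weights into a test. Hence every polynomial of
degree at most `n` orders the points of the simplex exactly as the power function of some test of
sample size `n` does. Apply this to `f i ^ 2`, which is minimal on the null hypothesis and not
constant, and to `∑ i, f i ^ 2`, whose zero locus is exactly the null hypothesis.
-/

section Homogenization

open MvPolynomial

variable {ι R : Type*} [Fintype ι] [CommSemiring R]

/-- The homogenization of `p` to degree `n` by the linear form `∑ j, X j`, which is `1` on the
simplex. It is homogeneous of degree `n` only for `p.totalDegree ≤ n`, since `n - d` truncates. -/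
noncomputable def sumHomogenize (n : ℕ) (p : MvPolynomial ι R) : MvPolynomial ι R :=
  ∑ d ∈ range (p.totalDegree + 1), homogeneousComponent d p * (∑ j, X j) ^ (n - d)

lemma isHomogeneous_sumHomogenize {n : ℕ} {p : MvPolynomial ι R} (hp : p.totalDegree ≤ n) :
    (sumHomogenize n p).IsHomogeneous n := by
  refine IsHomogeneous.sum _ _ _ fun d hd => ?_
  have hdn : d ≤ n := (Nat.lt_succ_iff.mp (mem_range.mp hd)).trans hp
  have hlin : (∑ j, X j : MvPolynomial ι R).IsHomogeneous 1 :=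
    IsHomogeneous.sum _ _ _ fun j _ => isHomogeneous_X R j
  simpa only [one_mul, Nat.add_sub_cancel' hdn] using
    (homogeneousComponent_isHomogeneous d p).mul (hlin.pow (n - d))

lemma eval_sumHomogenize (n : ℕ) (p : MvPolynomial ι R) {π : ι → R} (hπ : ∑ i, π i = 1) :
    eval π (sumHomogenize n p) = eval π p := by
  conv_rhs => rw [← sum_homogeneousComponent p]
  simp [sumHomogenize, hπ]

end Homogenization

section BernsteinCoeff

variable {ι : Type*} [Fintype ι]

/-- The coefficients of the form `H` in the basis of multinomial probabilities
`multinomial x * ∏ i, π i ^ x i`; they express `H` as a power function. -/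
noncomputable def bernsteinCoeff (H : MvPolynomial ι ℝ) (x : ι → ℕ) : ℝ :=
  H.coeff (Finsupp.equivFunOnFinite.symm x) / Nat.multinomial univ x

lemma bernsteinCoeff_mul_multinomial (H : MvPolynomial ι ℝ) (x : ι → ℕ) :
    bernsteinCoeff H x * Nat.multinomial univ x = H.coeff (Finsupp.equivFunOnFinite.symm x) :=
  div_mul_cancel₀ _ (Nat.cast_ne_zero.mpr (Nat.multinomial_pos _ _).ne')

end BernsteinCoeff

section PowerFunction

variable {ι : Type} [Fintype ι] [DecidableEq ι] {n : ℕ}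

lemma mem_countVecs {x : ι → ℕ} : x ∈ countVecs ι n ↔ ∑ i, x i = n := by
  simp only [countVecs, mem_filter, Fintype.mem_piFinset, mem_range, and_iff_right_iff_imp]
  rintro rfl i
  exact Nat.lt_succ_of_le (single_le_sum_of_canonicallyOrdered (mem_univ i))

lemma countVecs_eq_piAntidiag : countVecs ι n = piAntidiag univ n := by
  ext x
  simp [mem_countVecs]

lemma powerFn_const (b : ℝ) (π : ι → ℝ) : powerFn ι n (fun _ => b) π = b * (∑ i, π i) ^ n := by
  simp only [powerFn, mul_assoc, ← mul_sum, countVecs_eq_piAntidiag, sum_pow_eq_sum_piAntidiag]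

lemma powerFn_add (c c' : (ι → ℕ) → ℝ) (π : ι → ℝ) :
    powerFn ι n (fun x => c x + c' x) π = powerFn ι n c π + powerFn ι n c' π := by
  simp only [powerFn, add_mul, sum_add_distrib]

lemma powerFn_const_mul (a : ℝ) (c : (ι → ℕ) → ℝ) (π : ι → ℝ) :
    powerFn ι n (fun x => a * c x) π = a * powerFn ι n c π := by
  simp only [powerFn, mul_assoc, mul_sum]

lemma exists_isTest_powerFn_eq_half_add_mul (n : ℕ) (c : (ι → ℕ) → ℝ) :
    ∃ φ, IsTest ι n φ ∧ ∃ a : ℝ, 0 < a ∧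
      ∀ π ∈ probSimplex ι, powerFn ι n φ π = 1 / 2 + a * powerFn ι n c π := by
  obtain ⟨M, hM⟩ := ((countVecs ι n).image fun x => |c x|).exists_le
  obtain ⟨a, ha, haM⟩ : ∃ a : ℝ, 0 < a ∧ a * M ≤ 1 / 2 := by
    refine ⟨1 / (2 * (|M| + 1)), by positivity, ?_⟩
    rw [div_mul_eq_mul_div, one_mul, div_le_iff₀ (by positivity)]
    linarith [le_abs_self M]
  refine ⟨fun x => 1 / 2 + a * c x, fun x hx => ?_, a, ha, fun π hπ => ?_⟩
  · have hacx : |a * c x| ≤ 1 / 2 := by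
      rw [abs_mul, abs_of_pos ha]
      exact (mul_le_mul_of_nonneg_left (hM _ (mem_image_of_mem _ hx)) ha.le).trans haM
    constructor <;> linarith [abs_le.mp hacx]
  · rw [powerFn_add, powerFn_const, powerFn_const_mul, hπ.2, one_pow, mul_one]

lemma powerFn_bernsteinCoeff {H : MvPolynomial ι ℝ} (hH : H.IsHomogeneous n) (π : ι → ℝ) :
    powerFn ι n (bernsteinCoeff H) π = MvPolynomial.eval π H := by
  simp only [powerFn, bernsteinCoeff_mul_multinomial, MvPolynomial.eval_eq']
  symm
  refine sum_of_injOn DFunLike.coe DFunLike.coe_injective.injOn (fun s hs => ?_)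
    (fun x _ hx => ?_) fun s _ => by simp
  · rw [mem_coe, mem_countVecs, ← Finsupp.degree_eq_sum, hH.degree_eq_sum_deg_support hs,
      Finsupp.degree_apply]
  · have hcoeff : H.coeff (Finsupp.equivFunOnFinite.symm x) = 0 :=
      MvPolynomial.notMem_support_iff.mp fun hs => hx ⟨_, hs, rfl⟩
    rw [hcoeff, zero_mul]

lemma exists_isTest_powerFn_le_iff_eval_le {p : MvPolynomial ι ℝ} (hp : p.totalDegree ≤ n) :
    ∃ φ, IsTest ι n φ ∧ ∀ π ∈ probSimplex ι, ∀ π' ∈ probSimplex ι,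
      powerFn ι n φ π ≤ powerFn ι n φ π' ↔ MvPolynomial.eval π p ≤ MvPolynomial.eval π' p := by
  obtain ⟨φ, hφ, a, ha, hpow⟩ :=
    exists_isTest_powerFn_eq_half_add_mul n (bernsteinCoeff (sumHomogenize n p))
  have hpow_eval : ∀ π ∈ probSimplex ι,
      powerFn ι n φ π = 1 / 2 + a * MvPolynomial.eval π p := fun π hπ => by
    rw [hpow π hπ, powerFn_bernsteinCoeff (isHomogeneous_sumHomogenize hp),
      eval_sumHomogenize n p hπ.2]
  refine ⟨φ, hφ, fun π hπ π' hπ' => ?_⟩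
  rw [hpow_eval π hπ, hpow_eval π' hπ', add_le_add_iff_left, mul_le_mul_iff_right₀ ha]

end PowerFunction

section ZeroLocus

variable {ι : Type} [Fintype ι] {σ : Type*} {g : σ → MvPolynomial ι ℝ}

/-- The common zeros of the polynomials `g i` in the probability simplex: the null hypothesis cut
out by the equations `g i = 0`, in all coordinates of the simplex. -/
def simplexZeroLocus (g : σ → MvPolynomial ι ℝ) : Set (ι → ℝ) :=
  {π ∈ probSimplex ι | ∀ i, MvPolynomial.eval π (g i) = 0}

variable [DecidableEq ι] {n : ℕ}

lemma exists_isNTUB_simplexZeroLocus {i : σ} (hdeg : 2 * (g i).totalDegree ≤ n)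
    (hne : (simplexZeroLocus g).Nonempty)
    (hgi : ∃ π ∈ probSimplex ι, MvPolynomial.eval π (g i) ≠ 0) :
    ∃ φ, IsTest ι n φ ∧ IsNTUB ι n (simplexZeroLocus g) φ := by
  obtain ⟨φ, hφ, hle⟩ := exists_isTest_powerFn_le_iff_eval_le (p := g i ^ 2)
    ((MvPolynomial.totalDegree_pow _ _).trans hdeg)
  refine ⟨φ, hφ, fun π₀ hπ₀ π hπ => ?_, ?_⟩
  · rw [hle π₀ hπ₀.1 π hπ.1, map_pow, map_pow, hπ₀.2 i, zero_pow two_ne_zero]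
    exact sq_nonneg _
  · obtain ⟨π₀, hπ₀⟩ := hne
    obtain ⟨π, hπ, hgπ⟩ := hgi
    refine ⟨π₀, hπ₀.1, π, hπ, ne_of_lt ?_⟩
    rw [lt_iff_lt_of_le_iff_le (hle π hπ π₀ hπ₀.1), map_pow, map_pow, hπ₀.2 i,
      zero_pow two_ne_zero]
    exact sq_pos_of_ne_zero hgπ

lemma exists_isSUB_simplexZeroLocus [Finite σ] (hdeg : ∀ i, 2 * (g i).totalDegree ≤ n) :
    ∃ φ, IsTest ι n φ ∧ IsSUB ι n (simplexZeroLocus g) φ := by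
  cases nonempty_fintype σ
  obtain ⟨φ, hφ, hle⟩ := exists_isTest_powerFn_le_iff_eval_le (p := ∑ i, g i ^ 2)
    (MvPolynomial.totalDegree_finsetSum_le fun i _ =>
      (MvPolynomial.totalDegree_pow _ _).trans (hdeg i))
  refine ⟨φ, hφ, fun π₀ hπ₀ π hπ => ?_⟩
  obtain ⟨i, hgi⟩ : ∃ i, MvPolynomial.eval π (g i) ≠ 0 := by
    by_contra! hzero
    exact hπ.2 ⟨hπ.1, hzero⟩
  rw [lt_iff_lt_of_le_iff_le (hle π hπ.1 π₀ hπ₀.1)]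
  simp only [map_sum, map_pow, hπ₀.2, zero_pow two_ne_zero, sum_const_zero]
  exact sum_pos' (fun _ _ => sq_nonneg _) ⟨i, mem_univ i, sq_pos_of_ne_zero hgi⟩

end ZeroLocus

lemma exists_nonneg_sum_le_one_eval_ne_zero {σ : Type*} [Fintype σ] {p : MvPolynomial σ ℝ}
    (hp : p ≠ 0) : ∃ q : σ → ℝ, (∀ i, 0 ≤ q i) ∧ ∑ i, q i ≤ 1 ∧ MvPolynomial.eval q p ≠ 0 := by
  contrapose! hp
  let ε : ℝ := 1 / (Fintype.card σ + 1)
  have hε : 0 < ε := by positivity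
  refine MvPolynomial.funext_set (fun _ => Set.Icc 0 ε) (fun _ => Set.Icc_infinite hε)
    fun q hq => ?_
  rw [map_zero]
  refine hp q (fun i => (hq i trivial).1) ?_
  calc ∑ i, q i ≤ ∑ _i : σ, ε := sum_le_sum fun i _ => (hq i trivial).2
    _ = Fintype.card σ / (Fintype.card σ + 1) := by simp [ε, div_eq_mul_inv]
    _ ≤ 1 := div_le_one_of_le₀ (by linarith) (by positivity)

section Projection

variable {k : ℕ}

lemma projPoint_liftProj (q : Fin (k - 1) → ℝ) : projPoint k (liftProj k q) = q := by
  ext j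
  simp [projPoint, liftProj]

lemma liftProj_mem_probSimplex (hk : 0 < k) {q : Fin (k - 1) → ℝ} (hq : q ∈ projSimplex k) :
    liftProj k q ∈ probSimplex (Fin k) := by
  obtain ⟨l, rfl⟩ := Nat.exists_eq_add_one.mpr hk
  refine ⟨fun i => ?_, ?_⟩
  · unfold liftProj
    split
    · exact hq.1 _
    · exact sub_nonneg.mpr hq.2
  · rw [Fin.sum_univ_castSucc]
    simp [liftProj]

lemma sum_projPoint_add_last (π : Fin (k + 1) → ℝ) :
    ∑ j, projPoint (k + 1) π j + π (Fin.last k) = ∑ i, π i :=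
  (Fin.sum_univ_castSucc π).symm

lemma projPoint_mem_projSimplex (hk : 0 < k) {π : Fin k → ℝ} (hπ : π ∈ probSimplex (Fin k)) :
    projPoint k π ∈ projSimplex k := by
  obtain ⟨l, rfl⟩ := Nat.exists_eq_add_one.mpr hk
  refine ⟨fun j => hπ.1 _, ?_⟩
  linarith [sum_projPoint_add_last π, hπ.1 (Fin.last l), hπ.2]

lemma liftProj_projPoint (hk : 0 < k) {π : Fin k → ℝ} (hπ : ∑ i, π i = 1) :
    liftProj k (projPoint k π) = π := by
  obtain ⟨l, rfl⟩ := Nat.exists_eq_add_one.mpr hk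
  ext i
  cases i using Fin.lastCases with
  | last =>
    simp only [liftProj, Fin.val_last, Nat.add_sub_cancel, lt_irrefl, dite_false]
    linarith [sum_projPoint_add_last π]
  | cast j => exact dif_pos j.isLt

lemma eval_rename_castLE (π : Fin k → ℝ) (p : MvPolynomial (Fin (k - 1)) ℝ) :
    MvPolynomial.eval π (p.rename (Fin.castLE (Nat.sub_le k 1))) =
      MvPolynomial.eval (projPoint k π) p :=
  MvPolynomial.eval_rename ..

lemma liftProj_image_zeros_eq_simplexZeroLocus (hk : 0 < k) {σ : Type*}
    (f : σ → MvPolynomial (Fin (k - 1)) ℝ) :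
    liftProj k '' {q ∈ projSimplex k | ∀ i, MvPolynomial.eval q (f i) = 0} =
      simplexZeroLocus fun i => (f i).rename (Fin.castLE (Nat.sub_le k 1)) := by
  ext π
  simp only [simplexZeroLocus, eval_rename_castLE]
  constructor
  · rintro ⟨q, ⟨hq, hzero⟩, rfl⟩
    exact ⟨liftProj_mem_probSimplex hk hq, by rwa [projPoint_liftProj]⟩
  · rintro ⟨hπ, hzero⟩
    exact ⟨projPoint k π, ⟨projPoint_mem_projSimplex hk hπ, hzero⟩, liftProj_projPoint hk hπ.2⟩

lemma exists_mem_probSimplex_eval_projPoint_ne_zero (hk : 0 < k)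
    {p : MvPolynomial (Fin (k - 1)) ℝ} (hp : p ≠ 0) :
    ∃ π ∈ probSimplex (Fin k), MvPolynomial.eval (projPoint k π) p ≠ 0 := by
  obtain ⟨q, hq_nonneg, hq_sum, hpq⟩ := exists_nonneg_sum_le_one_eval_ne_zero hp
  refine ⟨liftProj k q, liftProj_mem_probSimplex hk ⟨hq_nonneg, hq_sum⟩, ?_⟩
  rwa [projPoint_liftProj]

end Projection

/-- upper bounds for the unbiasedness thresholds via sums of squares:
an NTUB test exists at sample size `2·min_i deg f_i`, an SUB test at `2·max_i deg f_i`. -/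
theorem stmt_10 (k m : ℕ) (hk : 2 ≤ k) (hm : 0 < m)
    (f : Fin m → MvPolynomial (Fin (k - 1)) ℝ) (hf : ∀ i, f i ≠ 0)
    (dmin dmax : ℕ)
    (hdmin : IsLeast {d : ℕ | ∃ i, (f i).totalDegree = d} dmin)
    (hdmax : IsGreatest {d : ℕ | ∃ i, (f i).totalDegree = d} dmax)
    (Pt0 : Set (Fin (k - 1) → ℝ))
    (hPt0 : Pt0 = {π' ∈ projSimplex k | ∀ i, MvPolynomial.eval π' (f i) = 0})
    (P0 : Set (Fin k → ℝ)) (hP0 : P0 = liftProj k '' Pt0)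
    (hne : P0.Nonempty) (hneq : P0 ≠ probSimplex (Fin k)) :
    (∃ φ, IsTest (Fin k) (2 * dmin) φ ∧ IsNTUB (Fin k) (2 * dmin) P0 φ) ∧
    (∃ φ, IsTest (Fin k) (2 * dmax) φ ∧ IsSUB (Fin k) (2 * dmax) P0 φ) := by
  have hk₀ : 0 < k := by omega
  have hdeg (i : Fin m) := Nat.mul_le_mul_left 2
    (MvPolynomial.totalDegree_rename_le (Fin.castLE (Nat.sub_le k 1)) (f i))
  rw [hP0, hPt0, liftProj_image_zeros_eq_simplexZeroLocus hk₀] at hne ⊢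
  constructor
  · obtain ⟨i, rfl⟩ := hdmin.1
    refine exists_isNTUB_simplexZeroLocus (hdeg i) hne ?_
    simpa only [eval_rename_castLE] using
      exists_mem_probSimplex_eval_projPoint_ne_zero hk₀ (hf i)
  · exact exists_isSUB_simplexZeroLocus fun i =>
      (hdeg i).trans (Nat.mul_le_mul_left 2 (hdmax.2 ⟨i, rfl⟩))
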